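/- arXiv:1601.06501 — 3 statements merged into one kernel-verified Lean document; each statement's English description precedes it below -/
import Mathlib

section
/- Let b be a prime, s, α, m ∈ ℕ with α ≥ 2, and let Q ⊂ [0,1)^{αs} be an order 1 digital (t', m, αs)-net over F_b with 0 ≤ t' ≤ m. Then the digital net P ⊂ [0,1)^s obtained by digit interlacing composition with factor α is an order α digital (t, m, s)-net over F_b with t = α · min{m, t' + ⌊s(α−1)/2⌋}. In particular, P satisfies μ_α(P) ≥ max{0, α(m − t' − ⌊s(α−1)/2⌋)} + 1. -/
/-!
Fix chosen rows `R j` of the interlaced matrices `D_j`. A chosen row `r` of `D_j` is row `r / α` of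
the matrix of `Q` numbered `(j, r % α)`, so the rows chosen from the `D_j` are distinct chosen rows
of the matrices of `Q`, and by the order 1 property it suffices that the (1-based) largest chosen
indices `d_{j,i}` satisfy `∑ d_{j,i} ≤ m - t'`.

For fixed `j`, the largest chosen row of every residue class modulo `α` gives at most `α` distinct
elements of `R j`, so their sum is at most the sum of the `α` largest elements of `R j`
(`sum_le_topSum`). Written 1-based, the row of class `i` is `α d_{j,i} - (α - 1 - i)`, hence
`α ∑_i d_{j,i} ≤ topSum α (R j) + ∑_{i < α} (α - 1 - i)` (`mul_sum_topSum_one_le`), the last sum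
being `α (α - 1) / 2`. Summing over `j` and dividing by `α` yields the claim; the rounding in
`⌊s (α - 1) / 2⌋` is harmless because `∑ d_{j,i}` is an integer. If `t = α m` there are no rows to
choose.

The bound on the Dick metric holds for every order `α` net (`lt_dickVec`): a nonzero `k` in the dual
net is a nontrivial linear relation among the rows indexed by the nonzero digits of `k`.
-/

open scoped BigOperators

/-- The `i`-th digit (starting from `i = 0`) of the `b`-adic expansion of `k`. -/
def bdigit (b k i : ℕ) : ℕ := k / b ^ i % b

/-- The set of indices of nonzero `b`-adic digits of `k`. -/
def bsupp (b k : ℕ) : Finset ℕ := (Finset.range (k + 1)).filter fun i => bdigit b k i ≠ 0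

/-- The Hamming metric `κ(k)`: the number of nonzero `b`-adic digits of `k`. -/
def hamming (b k : ℕ) : ℕ := (bsupp b k).card

/-- The Dick metric `μ_α(k)`: the sum of the `min(v, α)` largest exponents-plus-one
`a_1 > a_2 > ⋯` of the nonzero `b`-adic digits of `k`. -/
def dick (b α k : ℕ) : ℕ := ((((bsupp b k).sort (· ≤ ·)).reverse.take α).map (· + 1)).sum

/-- Digitwise addition `k ⊕ l` modulo `b` of the `b`-adic digits. -/
def dadd (b k l : ℕ) : ℕ :=
  ∑ i ∈ Finset.range (k + l + 1), (bdigit b k i + bdigit b l i) % b * b ^ i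

/-- Digitwise subtraction `k ⊖ l` modulo `b` of the `b`-adic digits. -/
def dsub (b k l : ℕ) : ℕ :=
  ∑ i ∈ Finset.range (k + l + 1), (bdigit b k i + (b - bdigit b l i)) % b * b ^ i

/-- Hamming metric of a vector: sum over coordinates. -/
def hammingVec (b : ℕ) {s : ℕ} (k : Fin s → ℕ) : ℕ := ∑ j, hamming b (k j)

/-- Dick metric of a vector: sum over coordinates. -/
def dickVec (b α : ℕ) {s : ℕ} (k : Fin s → ℕ) : ℕ := ∑ j, dick b α (k j)

/-- The column vector of the first `n` `b`-adic digits of `k`, as a vector over `F_b = ZMod b`. -/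
def trv (b n : ℕ) (k : ℕ) : Fin n → ZMod b := fun i => (bdigit b k i.1 : ZMod b)

/-- The dual net `P⊥` of the digital net with generating matrices `C`. -/
def dualNet (b : ℕ) {s n m : ℕ} (C : Fin s → Matrix (Fin n) (Fin m) (ZMod b)) :
    Set (Fin s → ℕ) :=
  {k | (∀ j, k j < b ^ n) ∧ ∑ j, ((C j).transpose).mulVec (trv b n (k j)) = 0}

/-- The dual net `P∞⊥` of the digital net with generating matrices `C` (no upper bound
on the components of `k`). -/
def dualNetInf (b : ℕ) {s n m : ℕ} (C : Fin s → Matrix (Fin n) (Fin m) (ZMod b)) :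
    Set (Fin s → ℕ) :=
  {k | ∑ j, ((C j).transpose).mulVec (trv b n (k j)) = 0}

/-- The `h`-th point of the digital net generated by the matrices `C` over `ZMod b`:
its `j`-th coordinate is `∑_{i=1}^n ξ_i b^{-i}` with `(ξ_1,…,ξ_n)ᵀ = C_j · (η_0,…,η_{m-1})ᵀ`,
where `η` are the `b`-adic digits of `h`. -/
noncomputable def netPoint (b : ℕ) {s n m : ℕ} (C : Fin s → Matrix (Fin n) (Fin m) (ZMod b))
    (h : ℕ) : Fin s → ℝ :=
  fun j => ∑ i : Fin n,
    (((C j).mulVec (fun v : Fin m => (bdigit b h v.1 : ZMod b)) i).val : ℝ) / (b : ℝ) ^ (i.1 + 1)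

/-- Sum of the `α` largest elements of a finite set of (0-based) row indices, counted
1-based, i.e. each index `i` contributes `i + 1`. -/
def topSum (α : ℕ) (R : Finset ℕ) : ℕ := (((R.sort (· ≤ ·)).reverse.take α).map (· + 1)).sum

/-- The digital net with generating matrices `C_1,…,C_s ∈ F_b^{n×m}` is an order `α`
digital `(t,m,s)`-net: for every choice of rows `i_{j,v_j} < ⋯ < i_{j,1}` from each `C_j`
such that the 1-based indices of the `min(α, v_j)` largest chosen rows of each matrix sum
to at most `αm - t`, the chosen rows are linearly independent over `F_b`. -/
def isOrderNet (b α t m : ℕ) {s n : ℕ} (C : Fin s → Matrix (Fin n) (Fin m) (ZMod b)) : Prop :=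
  ∀ R : Fin s → Finset (Fin n),
    (∑ j, topSum α ((R j).image Fin.val)) ≤ α * m - t →
    LinearIndependent (ZMod b) fun p : Σ j : Fin s, {i : Fin n // i ∈ R j} => C p.1 p.2.1

/-- The minimum Dick metric `μ_α(P)` of the digital net with generating matrices `C`,
namely the minimum of `μ_α(k)` over nonzero elements `k` of the dual net. -/
noncomputable def minDick (b α : ℕ) {s n m : ℕ}
    (C : Fin s → Matrix (Fin n) (Fin m) (ZMod b)) : ℕ :=
  sInf (dickVec b α '' {k | k ∈ dualNet b C ∧ k ≠ 0})

/-- The minimum Hamming metric `κ(P)` of the digital net with generating matrices `C`. -/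
noncomputable def minHamming (b : ℕ) {s n m : ℕ}
    (C : Fin s → Matrix (Fin n) (Fin m) (ZMod b)) : ℕ :=
  sInf (hammingVec b '' {k | k ∈ dualNet b C ∧ k ≠ 0})

/-- Dick's digit interlacing composition with interlacing factor `α` applied to the
generating matrices `C_1,…,C_{αs} ∈ F_b^{m×m}`: the resulting matrices
`D_1,…,D_s ∈ F_b^{αm×m}` are such that the (1-based) `(α(h-1)+i)`-th row of `D_j` is the
`h`-th row of `C_{α(j-1)+i}`. -/
def interlace {R : Type*} (α s m : ℕ) (C : Fin (α * s) → Matrix (Fin m) (Fin m) R) :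
    Fin s → Matrix (Fin (α * m)) (Fin m) R :=
  fun j => Matrix.of fun r v =>
    C ⟨α * j.1 + r.1 % α, by
        have hα : 0 < α := by
          rcases Nat.eq_zero_or_pos α with h | h
          · exact absurd r.2 (by simp [h])
          · exact h
        have h1 : α * (j.1 + 1) ≤ α * s := Nat.mul_le_mul_left α j.2
        have h2 : α * (j.1 + 1) = α * j.1 + α := by ring
        have h3 : r.1 % α < α := Nat.mod_lt _ hα
        omega⟩
      ⟨r.1 / α, by
        have hα : 0 < α := by
          rcases Nat.eq_zero_or_pos α with h | h
          · exact absurd r.2 (by simp [h])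
          · exact h
        exact Nat.div_lt_of_lt_mul r.2⟩
      v

/-! ### Sums of the largest elements of a finite set -/

lemma list_sum_le_take (l : List ℕ) (hl : l.Pairwise (· ≥ ·)) :
    ∀ (n : ℕ) (T : Finset ℕ), (∀ x ∈ T, x ∈ l) → T.card ≤ n →
      ∑ x ∈ T, (x + 1) ≤ ((l.take n).map (· + 1)).sum := by
  induction l with
  | nil =>
    intro n T hT _
    have : T = ∅ := Finset.eq_empty_of_forall_notMem fun x hx => by simpa using hT x hx
    simp [this]
  | cons a l ih =>
    intro n T hT hc
    rw [List.pairwise_cons] at hl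
    rcases T.eq_empty_or_nonempty with rfl | ⟨y, hy⟩
    · simp
    obtain ⟨n, rfl⟩ : ∃ n', n = n' + 1 :=
      ⟨n - 1, by have := Finset.card_pos.mpr ⟨y, hy⟩; omega⟩
    -- Match the head `a` of the list with `a` itself if `a ∈ T`, and with any element otherwise.
    obtain ⟨x, hx, hxa, hxl⟩ : ∃ x ∈ T, x ≤ a ∧ ∀ z ∈ T.erase x, z ∈ l := by
      by_cases ha : a ∈ T
      · refine ⟨a, ha, le_rfl, fun z hz => ?_⟩
        rw [Finset.mem_erase] at hz
        simpa [hz.1] using hT z hz.2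
      · have hTl : ∀ z ∈ T, z ∈ l := fun z hz => by
          have hne : z ≠ a := fun h => ha (h ▸ hz)
          simpa [hne] using hT z hz
        exact ⟨y, hy, hl.1 y (hTl y hy), fun z hz => hTl z (Finset.mem_of_mem_erase hz)⟩
    have h1 := ih hl.2 n (T.erase x) hxl (by rw [Finset.card_erase_of_mem hx]; omega)
    have h2 := Finset.add_sum_erase T (fun x => x + 1) hx
    simp only [List.take_succ_cons, List.map_cons, List.sum_cons]
    omega

lemma sum_le_topSum {α : ℕ} {S T : Finset ℕ} (hT : T ⊆ S) (hc : T.card ≤ α) :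
    ∑ x ∈ T, (x + 1) ≤ topSum α S := by
  refine list_sum_le_take _ ?_ α T (fun x hx => by simpa using hT hx) hc
  rw [List.pairwise_reverse]
  exact Finset.pairwise_sort S (· ≤ ·)

lemma topSum_one (S : Finset ℕ) : topSum 1 S = 0 ∨ ∃ x ∈ S, topSum 1 S = x + 1 := by
  unfold topSum
  rcases h : (S.sort (· ≤ ·)).reverse with _ | ⟨a, l⟩
  · simp
  · right
    have ha : a ∈ (S.sort (· ≤ ·)).reverse := by simp [h]
    exact ⟨a, by simpa using ha, by simp⟩

/-- The interlacing inequality for a single coordinate: `A i` are the rows chosen from the `i`-th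
component matrix and `S` contains the corresponding rows of the interlaced matrix. -/
lemma mul_sum_topSum_one_le (α : ℕ) (S : Finset ℕ) (A : ℕ → Finset ℕ)
    (hA : ∀ i < α, ∀ h ∈ A i, α * h + i ∈ S) :
    α * ∑ i ∈ Finset.range α, topSum 1 (A i)
      ≤ topSum α S + ∑ i ∈ Finset.range α, (α - 1 - i) := by
  -- `T i` consists of the largest chosen row of residue class `i`, if there is one.
  have key : ∀ i, ∃ T : Finset ℕ, i < α → T ⊆ S ∧ (∀ x ∈ T, x % α = i) ∧ T.card ≤ 1 ∧
      α * topSum 1 (A i) ≤ ∑ x ∈ T, (x + 1) + (α - 1 - i) := by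
    intro i
    rcases topSum_one (A i) with h | ⟨x, hx, h⟩
    · exact ⟨∅, fun _ => by simp [h]⟩
    · refine ⟨{α * x + i}, fun hi => ⟨by simpa using hA i hi x hx, ?_, by simp, ?_⟩⟩
      · simp [Nat.mod_eq_of_lt hi]
      · rw [h, Finset.sum_singleton, mul_add]
        omega
  choose T hT using key
  have hdisj : ((Finset.range α : Finset ℕ) : Set ℕ).PairwiseDisjoint T := by
    intro i hi j hj hij
    rw [Function.onFun, Finset.disjoint_left]
    intro x hxi hxj
    exact hij (((hT i (by simpa using hi)).2.1 x hxi).symm.trans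
      ((hT j (by simpa using hj)).2.1 x hxj))
  have hsub : (Finset.range α).biUnion T ⊆ S := by
    intro x hx
    obtain ⟨i, hi, hx⟩ := Finset.mem_biUnion.mp hx
    exact (hT i (by simpa using hi)).1 hx
  have hcard : ((Finset.range α).biUnion T).card ≤ α := by
    refine (Finset.card_biUnion_le_card_mul _ _ 1 fun i hi => ?_).trans (by simp)
    exact (hT i (by simpa using hi)).2.2.1
  have h1 := sum_le_topSum hsub hcard
  rw [Finset.sum_biUnion hdisj] at h1
  calc α * ∑ i ∈ Finset.range α, topSum 1 (A i)
      ≤ ∑ i ∈ Finset.range α, (∑ x ∈ T i, (x + 1) + (α - 1 - i)) := by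
        rw [Finset.mul_sum]
        exact Finset.sum_le_sum fun i hi => (hT i (by simpa using hi)).2.2.2
    _ ≤ _ := by rw [Finset.sum_add_distrib]; omega

/-! ### Digits and the dual net -/

lemma bsupp_mem {b k : ℕ} (hb : 1 < b) (i : ℕ) : i ∈ bsupp b k ↔ bdigit b k i ≠ 0 := by
  simp only [bsupp, Finset.mem_filter, Finset.mem_range, and_iff_right_iff_imp]
  intro h
  by_contra hik
  have h1 : k < b ^ i := lt_of_lt_of_le (by omega) (Nat.lt_pow_self hb (n := i)).le
  exact h (by simp [bdigit, Nat.div_eq_of_lt h1])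

lemma exists_bdigit_ne_zero {b k : ℕ} (hb : 1 < b) (hk : k ≠ 0) : ∃ i, bdigit b k i ≠ 0 := by
  refine ⟨Nat.log b k, ?_⟩
  have hpos : 0 < b ^ Nat.log b k := Nat.pow_pos (by omega)
  have h1 : 1 ≤ k / b ^ Nat.log b k :=
    (Nat.one_le_div_iff hpos).mpr (Nat.pow_log_le_self b hk)
  have h2 : k / b ^ Nat.log b k < b := by
    rw [Nat.div_lt_iff_lt_mul hpos, ← pow_succ']
    exact Nat.lt_pow_succ_log_self hb k
  rw [bdigit, Nat.mod_eq_of_lt h2]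
  omega

lemma bdigit_eq_zero {b k n i : ℕ} (hb : 1 < b) (hk : k < b ^ n) (hi : n ≤ i) :
    bdigit b k i = 0 := by
  have : k < b ^ i := hk.trans_le (Nat.pow_le_pow_right (by omega) hi)
  simp [bdigit, Nat.div_eq_of_lt this]

lemma lt_dickVec {b α t m s n : ℕ} (hb : b.Prime) {C : Fin s → Matrix (Fin n) (Fin m) (ZMod b)}
    (hC : isOrderNet b α t m C) {k : Fin s → ℕ} (hk : k ∈ dualNet b C) (hk0 : k ≠ 0) :
    α * m - t < dickVec b α k := by
  by_contra! hle
  obtain ⟨hlt, hsum⟩ := hk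
  have hb1 := hb.one_lt
  let R : Fin s → Finset (Fin n) := fun j => Finset.univ.filter fun i => bdigit b (k j) i ≠ 0
  have hR : ∀ j, (R j).image Fin.val = bsupp b (k j) := by
    intro j
    ext i
    rw [bsupp_mem hb1]
    simp only [R, Finset.mem_image, Finset.mem_filter, Finset.mem_univ, true_and]
    constructor
    · rintro ⟨i, hi, rfl⟩
      exact hi
    · intro hi
      have hin : i < n := by
        by_contra! h
        exact hi (bdigit_eq_zero hb1 (hlt j) h)
      exact ⟨⟨i, hin⟩, hi, rfl⟩
  have hli := hC R (by simp only [hR]; exact hle)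
  rw [Fintype.linearIndependent_iff] at hli
  have hzero := hli (fun p => trv b n (k p.1) p.2.1) (by
    rw [Fintype.sum_sigma, ← hsum]
    refine Finset.sum_congr rfl fun j _ => ?_
    rw [Matrix.mulVec_transpose, Matrix.vecMul_eq_sum]
    rw [Finset.sum_coe_sort (R j) (fun i => trv b n (k j) i • C j i)]
    refine Finset.sum_subset (Finset.subset_univ _) fun i _ hi => ?_
    have : bdigit b (k j) i = 0 := by simpa [R] using hi
    simp [trv, this])
  obtain ⟨j, hj⟩ := Function.ne_iff.mp hk0
  obtain ⟨i, hi⟩ := exists_bdigit_ne_zero hb1 hj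
  rw [← bsupp_mem hb1, ← hR] at hi
  obtain ⟨i, hiR, rfl⟩ := Finset.mem_image.mp hi
  rw [hR, bsupp_mem hb1] at hi
  have h0 : ((bdigit b (k j) i : ℕ) : ZMod b) = 0 := hzero ⟨j, i, hiR⟩
  rw [ZMod.natCast_eq_zero_iff] at h0
  exact hi (Nat.eq_zero_of_dvd_of_lt h0 (Nat.mod_lt _ hb.pos))

/-! ### Digit interlacing -/

lemma two_mul_sum_sub (α : ℕ) : 2 * ∑ i ∈ Finset.range α, (α - 1 - i) = α * (α - 1) := by
  rw [Finset.sum_range_reflect (fun i => i) α, mul_comm, Finset.sum_range_id_mul_two]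

lemma isOrderNet_interlace {b s α m t' : ℕ} (hα : 2 ≤ α) (ht' : t' ≤ m)
    {C : Fin (α * s) → Matrix (Fin m) (Fin m) (ZMod b)} (hQ : isOrderNet b 1 t' m C) :
    isOrderNet b α (α * min m (t' + s * (α - 1) / 2)) m (interlace α s m C) := by
  intro R hR
  rw [← Nat.mul_sub] at hR
  rcases Nat.lt_or_ge m (t' + s * (α - 1) / 2) with hlt | hge
  · -- Here `t = α m`, and a chosen row would contribute a positive amount.
    rw [min_eq_left hlt.le, Nat.sub_self, Nat.mul_zero, Nat.le_zero,
      Finset.sum_eq_zero_iff] at hR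
    have : IsEmpty (Σ j : Fin s, {i : Fin (α * m) // i ∈ R j}) := by
      refine ⟨fun ⟨j, i, hi⟩ => ?_⟩
      have h1 := sum_le_topSum (α := α) (S := (R j).image Fin.val) (T := {i.1})
        (Finset.singleton_subset_iff.mpr (Finset.mem_image_of_mem _ hi)) (by simp; omega)
      rw [hR j (Finset.mem_univ j)] at h1
      simp at h1
    exact linearIndependent_empty_type
  rw [min_eq_right hge] at hR
  -- `(j, i) ↦ α j + i` numbers the matrices of `Q`.
  let e : Fin s × Fin α ≃ Fin (α * s) := finProdFinEquiv.trans (finCongr (mul_comm s α))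
  have he : ∀ j i, (e (j, i)).1 = α * j.1 + i.1 := fun j i => by
    simp [e, add_comm]
  let A : Fin s → ℕ → Finset (Fin m) := fun j i =>
    Finset.univ.filter fun h => α * h.1 + i ∈ (R j).image Fin.val
  let R' : Fin (α * s) → Finset (Fin m) := fun q => A (e.symm q).1 (e.symm q).2
  have hbound : ∑ q, topSum 1 ((R' q).image Fin.val) ≤ 1 * m - t' := by
    rw [← Equiv.sum_comp e, Fintype.sum_prod_type]
    simp only [R', Equiv.symm_apply_apply]
    have h1 : ∀ j, α * ∑ i : Fin α, topSum 1 ((A j i).image Fin.val) ≤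
        topSum α ((R j).image Fin.val) + ∑ i ∈ Finset.range α, (α - 1 - i) := by
      intro j
      rw [Fin.sum_univ_eq_sum_range (fun i => topSum 1 ((A j i).image Fin.val)) α]
      refine mul_sum_topSum_one_le α _ _ fun i _ h hh => ?_
      obtain ⟨h', hh', rfl⟩ := Finset.mem_image.mp hh
      exact (Finset.mem_filter.mp hh').2
    have h2 := Finset.sum_le_sum fun j (_ : j ∈ Finset.univ) => h1 j
    rw [← Finset.mul_sum, Finset.sum_add_distrib, Finset.sum_const, Finset.card_univ,
      Fintype.card_fin, smul_eq_mul] at h2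
    have h3 := two_mul_sum_sub α
    generalize ∑ j, ∑ i : Fin α, topSum 1 ((A j i).image Fin.val) = X at h2 ⊢
    generalize ∑ i ∈ Finset.range α, (α - 1 - i) = G at h2 h3
    have h4 : α * (2 * X) ≤ α * (2 * (m - (t' + s * (α - 1) / 2)) + s * (α - 1)) := by
      have h5 : s * (2 * G) = α * (s * (α - 1)) := by rw [h3]; ring
      generalize m - (t' + s * (α - 1) / 2) = Y at hR ⊢
      generalize s * (α - 1) = Z at h5 ⊢
      nlinarith
    have h6 := Nat.le_of_mul_le_mul_left h4 (by omega)
    omega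
  have hα0 : 0 < α := by omega
  let f : (Σ j : Fin s, {i : Fin (α * m) // i ∈ R j}) →
      Σ q : Fin (α * s), {h : Fin m // h ∈ R' q} := fun p =>
    ⟨e (p.1, ⟨p.2.1.1 % α, Nat.mod_lt _ hα0⟩),
      ⟨p.2.1.1 / α, Nat.div_lt_of_lt_mul p.2.1.2⟩, by
        simp only [R', A, Equiv.symm_apply_apply, Finset.mem_filter, Finset.mem_univ, true_and,
          Nat.div_add_mod]
        exact Finset.mem_image_of_mem _ p.2.2⟩
  have hf : Function.Injective f := by
    rintro ⟨j, r, hr⟩ ⟨j', r', hr'⟩ h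
    have h1 := congrArg (fun z => e.symm z.1) h
    have h2 := congrArg (fun z => z.2.1.1) h
    simp only [f, Equiv.symm_apply_apply, Prod.mk.injEq, Fin.mk.injEq] at h1 h2
    obtain ⟨rfl, h1⟩ := h1
    have h3 : r = r' := Fin.ext (by
      rw [← Nat.div_add_mod r.1 α, ← Nat.div_add_mod r'.1 α, h1, h2])
    subst h3
    rfl
  have hli := (hQ R' hbound).comp f hf
  convert hli using 1
  ext p v
  exact congrFun (congrFun (congrArg C
    (Fin.ext (he p.1 ⟨p.2.1.1 % α, Nat.mod_lt _ hα0⟩).symm)) _) v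

/-- Dick. If `Q ⊂ [0,1)^{αs}` is an order `1` digital `(t',m,αs)`-net
over `F_b` with `0 ≤ t' ≤ m`, then the digital net `P ⊂ [0,1)^s` obtained by digit
interlacing composition with factor `α` is an order `α` digital `(t,m,s)`-net over `F_b`
with `t = α·min{m, t' + ⌊s(α-1)/2⌋}`; in particular
`μ_α(P) ≥ max{0, α(m - t' - ⌊s(α-1)/2⌋)} + 1`. -/
theorem interlaced_order_net
    (b s α m : ℕ) (hb : b.Prime) (hs : 0 < s) (hm : 0 < m) (hα : 2 ≤ α)
    (t' : ℕ) (ht' : t' ≤ m)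
    (C : Fin (α * s) → Matrix (Fin m) (Fin m) (ZMod b))
    (hQ : isOrderNet b 1 t' m C) :
    isOrderNet b α (α * min m (t' + s * (α - 1) / 2)) m (interlace α s m C) ∧
    ∀ k ∈ dualNet b (interlace α s m C), k ≠ 0 →
      max 0 ((α : ℤ) * ((m : ℤ) - (t' : ℤ) - ((s * (α - 1) / 2 : ℕ) : ℤ))) + 1
        ≤ (dickVec b α k : ℤ) := by
  have hP := isOrderNet_interlace hα ht' hQ
  refine ⟨hP, fun k hk hk0 => ?_⟩
  have h := lt_dickVec hb hP hk hk0
  rw [← Nat.mul_sub] at h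
  generalize s * (α - 1) / 2 = F at h ⊢
  rcases Nat.le_total m (t' + F) with hle | hle
  · have : (α : ℤ) * ((m : ℤ) - t' - F) ≤ 0 :=
      mul_nonpos_of_nonneg_of_nonpos (by positivity) (by omega)
    rw [max_eq_left this]
    omega
  · rw [min_eq_right hle] at h
    have h0 : 0 ≤ (α : ℤ) * ((m : ℤ) - t' - F) := mul_nonneg (by positivity) (by omega)
    rw [max_eq_right h0]
    zify [hle] at h
    rw [← sub_sub] at h
    omega
end

section
/- Let s, β, g, w ∈ ℕ and let b ≥ βgs be a prime. The digital net P ⊂ [0,1)^s of the paper's construction satisfies κ(P) ≥ g + 1 and μ_β(P) ≥ max{0, β(gw − ⌊s(β−1)/2⌋)} + 1. -/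
/-!
The row of a Chen–Skriganov matrix with parameter `x` and offset `o` in its block is, in the
monomial basis, the functional `f ↦ (D^{(o)} f)(x)` (Hasse derivative) on polynomials of degree
below `g w`. An element `k` of the dual net is therefore a vanishing combination of such
functionals, one for each nonzero digit of `k`, and `hermite_bound` says that the multiplicities of
any Hermite interpolation problem containing all functionals that occur add up to more than `g w`.

* Giving multiplicity `w` to each node that occurs shows that more than `g` nodes occur, hence
  `k` has more than `g` nonzero digits.
* Let `h_{j,i}` (`rowHeight`) be the highest row with a nonzero digit in the `i`-th matrix
  interlaced into the `j`-th coordinate. The first `h_{j,i}` rows of each matrix form a Hermite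
  problem, so `∑ h_{j,i} ≥ g w + 1`. The top digits of the `β` parts sit at distinct positions
  `β h_{j,i} - (β - 1 - i)` of `k_j` (with `0 ≤ i < β`), so `rowHeight_le_dick` gives
  `μ_β(k) ≥ β (g w + 1) - s β (β - 1) / 2`, and this exceeds `β (g w - ⌊s (β - 1) / 2⌋)`.
-/

open scoped BigOperators

/-- The Chen–Skriganov generating matrix (for one coordinate `j`, with row parameters
`βr l = β_{j,l}`): the entry in (1-based) row `u = (l-1)w + i` and column `v` is
`binom(v-1, i-1) · β_{j,l}^{v-i}` (which vanishes when `v < i` since the binomial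
coefficient is `0`). Indices here are 0-based. -/
def csMatrix (b w n : ℕ) (βr : ℕ → ZMod b) : Matrix (Fin n) (Fin n) (ZMod b) :=
  Matrix.of fun u v =>
    (Nat.choose v.1 (u.1 % w) : ZMod b) * βr (u.1 / w) ^ (v.1 - u.1 % w)

open Polynomial in
/-- The functional `f ↦ (D^{(o)} f)(x)` in coordinates, on polynomials of degree below `N`. -/
lemma taylor_coeff_eq_sum {F : Type*} [Field F] (x : F) (o N : ℕ) (f : F[X])
    (hf : f.natDegree < N) :
    (taylor x f).coeff o = ∑ v : Fin N, f.coeff v * ((Nat.choose v.1 o : F) * x ^ (v.1 - o)) := by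
  rw [taylor_coeff, hasseDeriv_apply, Polynomial.sum_over_range' _ (by simp) N hf, eval_finsetSum,
    ← Fin.sum_univ_eq_sum_range
      (fun v => eval x ((monomial (v - o)) ((Nat.choose v o : F) * f.coeff v)))]
  refine Finset.sum_congr rfl fun v _ => ?_
  rw [eval_monomial]
  ring

open Polynomial in
/-- Hermite interpolation, dual form. If a nontrivial combination of the functionals
`f ↦ (D^{(o i)} f)(p (t i))` kills every polynomial of degree below `N`, then the multiplicities
`m` of any family of nodes `T` accommodating all functionals that occur add up to more than `N`.
Otherwise `(X - p (t i₀))^{o i₀} ∏_{τ ≠ t i₀} (X - p τ)^{m τ}`, with `o i₀` maximal among the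
functionals that occur, is a polynomial of degree below `N` killed by all of them but the
`i₀`-th. -/
lemma hermite_bound {F ι τ : Type*} [Field F] [Fintype ι] [DecidableEq τ]
    (N : ℕ) (p : τ → F) (hp : Function.Injective p) (t : ι → τ) (o : ι → ℕ) (c : ι → F)
    (hinj : ∀ i i', t i = t i' → o i = o i' → i = i')
    (hc : c ≠ 0)
    (hker : ∀ f : F[X], f.natDegree < N →
      ∑ i, c i * (taylor (p (t i)) f).coeff (o i) = 0)
    (T : Finset τ) (m : τ → ℕ) (hT : ∀ i, c i ≠ 0 → t i ∈ T ∧ o i < m (t i)) :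
    N < ∑ x ∈ T, m x := by
  classical
  by_contra! hle
  obtain ⟨i1, hi1⟩ := Function.ne_iff.mp hc
  obtain ⟨i0, hi0, hmax⟩ := (Finset.univ.filter fun i => c i ≠ 0).exists_max_image o
    ⟨i1, by simpa using hi1⟩
  have hci0 : c i0 ≠ 0 := by simpa using hi0
  obtain ⟨hT0, hm0⟩ := hT i0 hci0
  set q : F[X] := ∏ x ∈ T.erase (t i0), (X - C (p x)) ^ m x with hq
  have hqm : q.Monic := monic_prod_of_monic _ _ fun x _ => (monic_X_sub_C _).pow _
  have hqd : q.natDegree = ∑ x ∈ T.erase (t i0), m x := by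
    rw [hq, natDegree_prod_of_monic _ _ fun x _ => (monic_X_sub_C _).pow _]
    simp
  have hdeg : ((X - C (p (t i0))) ^ o i0 * q).natDegree < N := by
    rw [((monic_X_sub_C _).pow _).natDegree_mul hqm, hqd]
    have := Finset.add_sum_erase T m hT0
    simp
    omega
  have h := hker _ hdeg
  have htay : ∀ (x : F) (n : ℕ), taylor x ((X - C x) ^ n) = X ^ n := by
    intro x n
    simp
  rw [Finset.sum_eq_single i0] at h
  · rw [taylor_mul, htay, coeff_X_pow_mul', if_pos le_rfl, Nat.sub_self, taylor_coeff_zero] at h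
    rcases mul_eq_zero.mp h with h | h
    · exact hci0 h
    · rw [hq, eval_prod, Finset.prod_eq_zero_iff] at h
      obtain ⟨x, hx, hx0⟩ := h
      have h1 : p (t i0) - p x = 0 := by
        simpa using eq_zero_of_pow_eq_zero (by simpa using hx0)
      exact (Finset.ne_of_mem_erase hx) (hp (sub_eq_zero.mp h1)).symm
  · intro i _ hi
    by_cases hci : c i = 0
    · simp [hci]
    obtain ⟨hTi, hmi⟩ := hT i hci
    by_cases hti : t i = t i0
    · have hoi : o i ≤ o i0 := hmax i (by simpa using hci)
      have hne : o i ≠ o i0 := fun h => hi (hinj _ _ hti h)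
      rw [hti, taylor_mul, htay, coeff_X_pow_mul', if_neg (by omega), mul_zero]
    · have hmem : t i ∈ T.erase (t i0) := Finset.mem_erase.mpr ⟨hti, hTi⟩
      rw [hq, ← Finset.mul_prod_erase _ _ hmem, mul_left_comm, taylor_mul, htay,
        coeff_X_pow_mul', if_neg (by omega), mul_zero]
  · simp

lemma sum_le_sum_take {L : List ℕ} (hL : L.Pairwise (· ≥ ·)) :
    ∀ (α : ℕ) (S : Finset ℕ), S ⊆ L.toFinset → S.card ≤ α →
      ∑ i ∈ S, (i + 1) ≤ ((L.take α).map (· + 1)).sum := by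
  induction L with
  | nil =>
    intro α S hS _
    have : S = ∅ := by simpa using hS
    simp [this]
  | cons a L ih =>
    intro α S hS hcard
    rcases S.eq_empty_or_nonempty with rfl | hne
    · simp
    obtain ⟨hall, hL'⟩ := List.pairwise_cons.mp hL
    obtain ⟨α, rfl⟩ : ∃ α', α = α' + 1 :=
      ⟨α - 1, by have := hne.card_pos; omega⟩
    -- Exchange argument: remove `a` from `S` if it is there, otherwise any (smaller) element.
    obtain ⟨x, hx, hax⟩ : ∃ x ∈ S, a ∈ S → x = a := by
      by_cases h : a ∈ S
      · exact ⟨a, h, fun _ => rfl⟩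
      · obtain ⟨x, hx⟩ := hne
        exact ⟨x, hx, fun h' => absurd h' h⟩
    have hxa : x ≤ a := by
      have := hS hx
      simp only [List.toFinset_cons, Finset.mem_insert, List.mem_toFinset] at this
      rcases this with h | h
      · exact h.le
      · exact hall x h
    have hsub : S.erase x ⊆ L.toFinset := by
      intro y hy
      obtain ⟨hyx, hyS⟩ := Finset.mem_erase.mp hy
      have := hS hyS
      rw [List.toFinset_cons, Finset.mem_insert] at this
      rcases this with h | h
      · subst h
        exact absurd (hax hyS).symm hyx
      · exact h
    have h := ih hL' α (S.erase x) hsub (by rw [Finset.card_erase_of_mem hx]; omega)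
    rw [← Finset.add_sum_erase S _ hx]
    simp only [List.take_succ_cons, List.map_cons, List.sum_cons]
    omega

/-- The Dick metric dominates the sum over any at most `α` positions of nonzero digits. -/
lemma sum_le_dick (b α k : ℕ) (S : Finset ℕ) (hS : S ⊆ bsupp b k) (hcard : S.card ≤ α) :
    ∑ i ∈ S, (i + 1) ≤ dick b α k := by
  refine sum_le_sum_take ?_ α S (by simpa using hS) hcard
  rw [List.pairwise_reverse]
  exact Finset.pairwise_sort _ _

lemma mem_bsupp {b k i : ℕ} (hb : 1 < b) : i ∈ bsupp b k ↔ bdigit b k i ≠ 0 := by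
  unfold bsupp
  rw [Finset.mem_filter, Finset.mem_range, and_iff_right_iff_imp]
  intro h
  by_contra! hk
  apply h
  have : k < b ^ i := lt_trans (by omega) (Nat.lt_pow_self hb)
  simp [bdigit, Nat.div_eq_of_lt this]

lemma bsupp_nonempty {b k : ℕ} (hb : 1 < b) (hk : k ≠ 0) : (bsupp b k).Nonempty := by
  refine ⟨Nat.log b k, (mem_bsupp hb).mpr ?_⟩
  have h1 := Nat.pow_log_le_self b hk
  have h2 := Nat.lt_pow_succ_log_self hb k
  have h3 : k / b ^ Nat.log b k < b := Nat.div_lt_of_lt_mul (by rwa [pow_succ] at h2)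
  have h4 : 0 < k / b ^ Nat.log b k := Nat.div_pos h1 (by positivity)
  rw [bdigit, Nat.mod_eq_of_lt h3]
  omega

lemma lt_of_mem_bsupp {b k n i : ℕ} (hb : 1 < b) (hk : k < b ^ n) (hi : i ∈ bsupp b k) :
    i < n := by
  by_contra! h
  apply (mem_bsupp hb).mp hi
  have : k < b ^ i := hk.trans_le (Nat.pow_le_pow_right (by omega) h)
  simp [bdigit, Nat.div_eq_of_lt this]

lemma trv_ne_zero_iff {b n k : ℕ} (hb : 1 < b) (i : Fin n) :
    trv b n k i ≠ 0 ↔ i.1 ∈ bsupp b k := by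
  rw [mem_bsupp hb, trv, Ne, ZMod.natCast_eq_zero_iff, not_iff_not]
  constructor
  · intro h
    exact Nat.eq_zero_of_dvd_of_lt h (Nat.mod_lt _ (by omega))
  · intro h
    simp [h]

/-- The largest 1-based row index, in the `i`-th of the `β` interlaced matrices, carrying a
nonzero digit of `k` (and `0` if there is none): the NRT metric of the `i`-th deinterlaced part
of `k`. -/
def rowHeight (b β k i : ℕ) : ℕ := ((bsupp b k).filter fun r => r % β = i).sup fun r => r / β + 1

lemma lt_rowHeight {b β k r : ℕ} (hr : r ∈ bsupp b k) : r / β < rowHeight b β k (r % β) := by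
  have : r / β + 1 ≤ rowHeight b β k (r % β) :=
    Finset.le_sup (f := fun r => r / β + 1) (by simp [hr])
  omega

lemma exists_rowHeight {b β k i : ℕ} (h : rowHeight b β k i ≠ 0) :
    ∃ r ∈ bsupp b k, r % β = i ∧ rowHeight b β k i = r / β + 1 := by
  have hne : ((bsupp b k).filter fun r => r % β = i).Nonempty := by
    by_contra h'
    rw [Finset.not_nonempty_iff_eq_empty] at h'
    exact h (by simp [rowHeight, h'])
  obtain ⟨r, hr, hsup⟩ := Finset.exists_mem_eq_sup _ hne fun r => r / β + 1
  rw [Finset.mem_filter] at hr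
  exact ⟨r, hr.1, hr.2, hsup⟩

/-- Comparison of the Dick metric with the NRT metrics of the deinterlaced parts: a highest
digit in row `h` of the `i`-th part sits at position `β (h - 1) + i + 1 = β h - (β - 1 - i)`
of `k`, and `∑_{i < β} (β - 1 - i) = β (β - 1) / 2`. -/
lemma rowHeight_le_dick (b β k : ℕ) :
    2 * (β * ∑ i : Fin β, rowHeight b β k i) ≤ 2 * dick b β k + β * (β - 1) := by
  classical
  have hex : ∀ i : Fin β, ∃ r, rowHeight b β k i ≠ 0 →
      r ∈ bsupp b k ∧ r % β = i ∧ rowHeight b β k i = r / β + 1 := by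
    intro i
    by_cases h : rowHeight b β k i = 0
    · exact ⟨0, fun h' => absurd h h'⟩
    · obtain ⟨r, h1, h2, h3⟩ := exists_rowHeight h
      exact ⟨r, fun _ => ⟨h1, h2, h3⟩⟩
  choose r hr using hex
  set I : Finset (Fin β) := Finset.univ.filter fun i => rowHeight b β k i ≠ 0 with hI
  have hmem : ∀ i ∈ I, rowHeight b β k i ≠ 0 := fun i hi => by simpa [hI] using hi
  have hinj : Set.InjOn r I := by
    intro i hi i' hi' h
    have h1 := (hr i (hmem i hi)).2.1
    have h2 := (hr i' (hmem i' hi')).2.1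
    exact Fin.ext (by rw [← h1, ← h2, h])
  have hd : ∑ i ∈ I, (r i + 1) ≤ dick b β k := by
    have := sum_le_dick b β k (I.image r)
      (by
        intro x hx
        obtain ⟨i, hi, rfl⟩ := Finset.mem_image.mp hx
        exact (hr i (hmem i hi)).1)
      (Finset.card_image_le.trans ((Finset.card_le_univ I).trans (by simp)))
    rwa [Finset.sum_image hinj] at this
  have hsum : β * ∑ i : Fin β, rowHeight b β k i
      ≤ ∑ i ∈ I, (r i + 1) + ∑ i : Fin β, (β - 1 - i.1) := by
    rw [Finset.mul_sum, hI, Finset.sum_filter, ← Finset.sum_add_distrib]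
    refine Finset.sum_le_sum fun i _ => ?_
    by_cases h : rowHeight b β k i = 0
    · simp [h]
    · obtain ⟨-, h2, h3⟩ := hr i h
      rw [if_pos h]
      have h4 := Nat.div_add_mod (r i) β
      have h5 := i.2
      rw [h3, mul_add]
      omega
  have hg : 2 * ∑ i : Fin β, (β - 1 - i.1) = β * (β - 1) := by
    rw [Fin.sum_univ_eq_sum_range (fun i => β - 1 - i), Finset.sum_range_reflect (fun i => i) β,
      mul_comm, Finset.sum_range_id_mul_two]
  omega

lemma sum_min_le (w h g : ℕ) : ∑ l ∈ Finset.range g, min w (h - l * w) ≤ min h (g * w) := by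
  induction g with
  | zero => simp
  | succ g ih =>
    rw [Finset.sum_range_succ, Nat.succ_mul]
    omega

/-- For `s, β, g, w ∈ ℕ` and a prime `b ≥ βgs`, the digital net
`P ⊂ [0,1)^s` of the paper's construction (digit interlacing with factor `β` applied to
the Chen–Skriganov net in dimension `βs`) satisfies `κ(P) ≥ g + 1` and
`μ_β(P) ≥ max{0, β(gw - ⌊s(β-1)/2⌋)} + 1`. -/
theorem construction_metrics
    (b s β g w : ℕ) (hb : b.Prime) (hs : 0 < s) (hβ : 0 < β) (hg : 0 < g) (hw : 0 < w)
    (hbs : β * g * s ≤ b) (βe : ℕ → ℕ → ZMod b)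
    (hdist : ∀ j l j' l', j < β * s → l < g → j' < β * s → l' < g →
      βe j l = βe j' l' → j = j' ∧ l = l') :
    ∀ k ∈ dualNet b (interlace β s (g * w) fun j => csMatrix b w (g * w) (βe j.1)),
      k ≠ 0 →
      g + 1 ≤ hammingVec b k ∧
      max 0 ((β : ℤ) * (((g * w : ℕ) : ℤ) - ((s * (β - 1) / 2 : ℕ) : ℤ))) + 1
        ≤ (dickVec b β k : ℤ) := by
  intro k hk hk0
  have : Fact b.Prime := ⟨hb⟩
  have hb1 : 1 < b := hb.one_lt
  obtain ⟨hlt, hdual⟩ := hk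
  -- The digit at position `r` of `k j` multiplies the Hasse derivative functional of order `o`
  -- at the node `p t`, where `t` records the matrix and the block of the row.
  let p : Fin s × Fin β × Fin g → ZMod b := fun x => βe (β * x.1 + x.2.1) x.2.2
  let t : Fin s × Fin (β * (g * w)) → Fin s × Fin β × Fin g := fun x =>
    (x.1, ⟨x.2 % β, Nat.mod_lt _ hβ⟩, ⟨x.2 / β / w, Nat.div_lt_of_lt_mul (by
      rw [mul_comm w g]; exact Nat.div_lt_of_lt_mul x.2.2)⟩)
  let o : Fin s × Fin (β * (g * w)) → ℕ := fun x => x.2 / β % w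
  let c : Fin s × Fin (β * (g * w)) → ZMod b := fun x => trv b (β * (g * w)) (k x.1) x.2
  have hidx : ∀ (j : Fin s) (i : Fin β), β * j.1 + i.1 < β * s := by
    intro j i
    have h1 : β * (j.1 + 1) ≤ β * s := Nat.mul_le_mul_left β j.2
    have h2 := i.2
    rw [mul_add] at h1
    omega
  have hp : Function.Injective p := by
    rintro ⟨j, i, l⟩ ⟨j', i', l'⟩ h
    obtain ⟨h1, h2⟩ := hdist _ _ _ _ (hidx j i) l.2 (hidx j' i') l'.2 h
    have h3 := congrArg (· / β) h1
    have h4 := congrArg (· % β) h1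
    simp only [Nat.mul_add_div hβ, Nat.mul_add_mod, Nat.div_eq_of_lt i.2, Nat.div_eq_of_lt i'.2,
      Nat.mod_eq_of_lt i.2, Nat.mod_eq_of_lt i'.2, add_zero] at h3 h4
    rw [Fin.ext h3, Fin.ext h4, Fin.ext h2]
  have hinj : ∀ x x', t x = t x' → o x = o x' → x = x' := by
    rintro ⟨j, r⟩ ⟨j', r'⟩ h1 h2
    simp only [t, o, Prod.mk.injEq, Fin.mk.injEq] at h1 h2
    obtain ⟨h3, h4, h5⟩ := h1
    have h6 : r.1 / β = r'.1 / β := by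
      rw [← Nat.div_add_mod (r.1 / β) w, h5, h2, Nat.div_add_mod]
    have h7 : r.1 = r'.1 := by
      rw [← Nat.div_add_mod r.1 β, h6, h4, Nat.div_add_mod]
    rw [h3, Fin.ext h7]
  have hcne : ∀ x, c x ≠ 0 ↔ x.2.1 ∈ bsupp b (k x.1) := fun x => trv_ne_zero_iff hb1 x.2
  obtain ⟨j0, hj0⟩ := Function.ne_iff.mp hk0
  obtain ⟨r0, hr0⟩ := bsupp_nonempty hb1 hj0
  have hc : c ≠ 0 := by
    intro h
    exact (hcne (j0, ⟨r0, lt_of_mem_bsupp hb1 (hlt j0) hr0⟩)).mpr hr0 (by rw [h]; rfl)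
  have hker : ∀ f : Polynomial (ZMod b), f.natDegree < g * w →
      ∑ x, c x * (Polynomial.taylor (p (t x)) f).coeff (o x) = 0 := by
    intro f hf
    simp only [taylor_coeff_eq_sum _ _ _ f hf, Finset.mul_sum]
    rw [Finset.sum_comm]
    refine Finset.sum_eq_zero fun v _ => ?_
    have h := congrFun hdual v
    simp only [Finset.sum_apply, Matrix.mulVec, dotProduct, Matrix.transpose_apply,
      Pi.zero_apply] at h
    rw [Fintype.sum_prod_type]
    rw [← mul_zero (f.coeff v), ← h, Finset.mul_sum]
    refine Finset.sum_congr rfl fun j _ => ?_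
    rw [Finset.mul_sum]
    refine Finset.sum_congr rfl fun r _ => ?_
    simp only [interlace, csMatrix, Matrix.of_apply, c, p, t, o]
    ring
  constructor
  · -- Each node that occurs gets full multiplicity `w`.
    have h := hermite_bound (g * w) p hp t o c hinj hc hker
      ((Finset.univ.filter fun x => c x ≠ 0).image t) (fun _ => w)
      (fun x hx => ⟨Finset.mem_image_of_mem _ (by simpa using hx), Nat.mod_lt _ hw⟩)
    rw [Finset.sum_const, smul_eq_mul] at h
    have h1 := Nat.lt_of_mul_lt_mul_right h
    have h2 : (Finset.univ.filter fun x => c x ≠ 0).card ≤ hammingVec b k := by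
      unfold hammingVec hamming
      rw [← Finset.card_sigma]
      refine Finset.card_le_card_of_injOn (fun x => ⟨x.1, x.2.1⟩) ?_ ?_
      · intro x hx
        have hx' : c x ≠ 0 := by simpa using hx
        simpa using (hcne x).mp hx'
      · rintro ⟨j, r⟩ - ⟨j', r'⟩ - h
        simp only [Sigma.mk.injEq] at h
        rw [h.1, Fin.ext (eq_of_heq h.2)]
    exact Nat.succ_le_of_lt (h1.trans_le (Finset.card_image_le.trans h2))
  · have hpos : 1 ≤ dickVec b β k := by
      have h1 : dick b β (k j0) ≤ dickVec b β k :=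
        Finset.single_le_sum (f := fun j => dick b β (k j)) (fun _ _ => Nat.zero_le _)
          (Finset.mem_univ j0)
      have h2 := sum_le_dick b β (k j0) {r0} (by simpa using hr0) (by rw [Finset.card_singleton]; exact hβ)
      rw [Finset.sum_singleton] at h2
      omega
    -- The first `rowHeight` rows of a matrix use up the blocks of `w` derivatives in order.
    have h := hermite_bound (g * w) p hp t o c hinj hc hker Finset.univ
      (fun x => min w (rowHeight b β (k x.1) x.2.1 - x.2.2 * w))
      (by
        intro x hx
        refine ⟨Finset.mem_univ _, lt_min (Nat.mod_lt _ hw) ?_⟩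
        have h1 := lt_rowHeight (β := β) ((hcne x).mp hx)
        have h2 := Nat.div_add_mod (x.2.1 / β) w
        rw [mul_comm] at h2
        simp only [t, o]
        omega)
    have hN : g * w < ∑ j, ∑ i : Fin β, rowHeight b β (k j) i := by
      refine h.trans_le ?_
      rw [Fintype.sum_prod_type]
      refine Finset.sum_le_sum fun j _ => ?_
      rw [Fintype.sum_prod_type]
      refine Finset.sum_le_sum fun i _ => ?_
      rw [Fin.sum_univ_eq_sum_range (fun l => min w (rowHeight b β (k j) i - l * w))]
      exact (sum_min_le _ _ _).trans (min_le_left _ _)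
    have hD : 2 * (β * ∑ j, ∑ i : Fin β, rowHeight b β (k j) i)
        ≤ 2 * dickVec b β k + s * (β * (β - 1)) := by
      have h1 := Finset.sum_le_sum fun j (_ : j ∈ Finset.univ) => rowHeight_le_dick b β (k j)
      rw [Finset.sum_add_distrib, ← Finset.mul_sum, ← Finset.mul_sum, ← Finset.mul_sum] at h1
      simpa [dickVec] using h1
    have hmul : β * (g * w + 1) ≤ β * ∑ j, ∑ i : Fin β, rowHeight b β (k j) i :=
      Nat.mul_le_mul_left β hN
    have hfl : s * (β * (β - 1)) ≤ β * (2 * (s * (β - 1) / 2) + 1) := by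
      rw [mul_left_comm]
      exact Nat.mul_le_mul_left β (by omega)
    rw [← max_add_add_right, max_le_iff]
    refine ⟨by exact_mod_cast hpos, ?_⟩
    generalize s * (β - 1) / 2 = q at hfl ⊢
    have hfin : 2 * (β * (g * w + 1)) ≤ 2 * dickVec b β k + β * (2 * q + 1) := by omega
    zify at hfin hβ
    push_cast
    nlinarith
end

section
/- Let b be a prime and α ∈ ℕ with α ≥ 2. If k, l ∈ ℕ₀ satisfy κ(k ⊖ l) > 2α, then K̂_α(k, l) = 0. -/
/-!
The kernel is a sum of products `B_r(x) B_r(y)` with `r ≤ α` and a linear combination of the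
powers `|x - y| ^ j` with `j ≤ 2α`; no property of the Bernoulli polynomials beyond their degree is
used. If `k` and `l` differ in more than `2α` digits, then `κ(k) + κ(l) > 2α`.

* A polynomial of degree less than `κ(k)` has vanishing `k`-th Walsh coefficient (`W1_poly`). Hence
  a product `p(x) q(y)` with `deg p + deg q < κ(k) + κ(l)` has vanishing `(k,l)`-th coefficient. This
  removes the products `B_r(x) B_r(y)` and the even power `|x - y| ^ (2α) = (x - y) ^ (2α)`.
* For `j < 2α` the coefficient of `|x - y| ^ j` vanishes because `k` and `l` differ in more than
  `j + 1` digits (`W2_abs`).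

Both vanishing results are proved by self-similarity: on substituting `x = (i + x') / b` the
function `wal_k` becomes a phase times `wal_{k / b}` (`walsh_scale`), and the terms that escape the
induction are killed by the orthogonality of the characters of `ℤ/bℤ` (`sum_ph`).
-/

open scoped BigOperators

open MeasureTheory

/-- The `i`-th (for `i ≥ 1`) `b`-adic digit `ξ_i` of a real number `x ∈ [0,1)`, using the
expansion in which infinitely many digits differ from `b - 1`. -/
noncomputable def rdigit (b : ℕ) (x : ℝ) (i : ℕ) : ℤ := ⌊x * (b : ℝ) ^ i⌋ % b

/-- The `k`-th `b`-adic Walsh function, `wal_k(x) = ω_b^{κ_0 ξ_1 + κ_1 ξ_2 + ⋯}` where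
`ω_b = exp(2π√-1/b)`, `κ` are the `b`-adic digits of `k` and `ξ` those of `x`. -/
noncomputable def walsh (b k : ℕ) (x : ℝ) : ℂ :=
  Complex.exp (2 * (Real.pi : ℂ) * Complex.I / (b : ℂ) *
    ∑ a ∈ Finset.range (k + 1), (bdigit b k a : ℂ) * (rdigit b x (a + 1) : ℂ))

/-- The `k`-th `b`-adic Walsh function on `[0,1)^s`, `wal_k(x) = ∏_j wal_{k_j}(x_j)`. -/
noncomputable def walshVec (b : ℕ) {s : ℕ} (k : Fin s → ℕ) (x : Fin s → ℝ) : ℂ :=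
  ∏ j, walsh b (k j) (x j)

/-- The Bernoulli polynomial `B_r` evaluated at a real number. -/
noncomputable def bernoulliPoly (r : ℕ) (x : ℝ) : ℝ := Polynomial.aeval x (Polynomial.bernoulli r)

/-- The reproducing kernel `K_α` of the Sobolev space `H_α`:
`K_α(x,y) = ∑_{r=0}^{α} B_r(x)B_r(y)/(r!)² + (-1)^{α+1} B_{2α}(|x-y|)/(2α)!`. -/
noncomputable def Kker (α : ℕ) (x y : ℝ) : ℝ :=
  ∑ r ∈ Finset.range (α + 1), bernoulliPoly r x * bernoulliPoly r y / ((r.factorial : ℝ)) ^ 2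
    + (-1 : ℝ) ^ (α + 1) * bernoulliPoly (2 * α) |x - y| / ((2 * α).factorial : ℝ)

/-- The `(k,l)`-th Walsh coefficient of the kernel `K_α`. -/
noncomputable def Khat (b α : ℕ) (k l : ℕ) : ℂ :=
  ∫ x in Set.Ico (0 : ℝ) 1, ∫ y in Set.Ico (0 : ℝ) 1,
    (Kker α x y : ℂ) * (starRingEnd ℂ) (walsh b k x) * walsh b l y

/-- The `(k,l)`-th Walsh coefficient of the `s`-variate kernel
`K_{α,s}(x,y) = ∏_j K_α(x_j, y_j)`. -/
noncomputable def KhatS (b α s : ℕ) (k l : Fin s → ℕ) : ℂ :=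
  ∫ x in Set.univ.pi fun _ : Fin s => Set.Ico (0 : ℝ) 1,
    ∫ y in Set.univ.pi fun _ : Fin s => Set.Ico (0 : ℝ) 1,
      ((∏ j, Kker α (x j) (y j) : ℝ) : ℂ) * (starRingEnd ℂ) (walshVec b k x) * walshVec b l y

/-- The `k`-th Walsh coefficient `b̂_r(k)` of the normalized Bernoulli polynomial `B_r/r!`. -/
noncomputable def bhat (b r k : ℕ) : ℂ :=
  ∫ x in Set.Ico (0 : ℝ) 1,
    ((bernoulliPoly r x / (r.factorial : ℝ) : ℝ) : ℂ) * (starRingEnd ℂ) (walsh b k x)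

/-- The `(k,l)`-th Walsh coefficient `b̂_{r,per}(k,l)` of `(x,y) ↦ B̃_r(x-y)/r!`, where
`B̃_r` is the 1-periodic extension of the Bernoulli polynomial `B_r` from `[0,1)` to `ℝ`. -/
noncomputable def bhatPer (b r : ℕ) (k l : ℕ) : ℂ :=
  ∫ x in Set.Ico (0 : ℝ) 1, ∫ y in Set.Ico (0 : ℝ) 1,
    ((bernoulliPoly r (Int.fract (x - y)) / (r.factorial : ℝ) : ℝ) : ℂ) *
      (starRingEnd ℂ) (walsh b k x) * walsh b l y

/-! ### Digits -/

/-- The number of positions below `N` at which the `b`-adic digits of `k` and `l` differ. The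
cutoff `N` serves as the induction variable; `dg b k 0 N` counts nonzero digits. -/
def dg (b k l N : ℕ) : ℕ := ((Finset.range N).filter fun i => bdigit b k i ≠ bdigit b l i).card

lemma bdigit_zero (b k : ℕ) : bdigit b k 0 = k % b := by simp [bdigit]

lemma bdigit_succ (b k i : ℕ) : bdigit b k (i + 1) = bdigit b (k / b) i := by
  simp [bdigit, pow_succ', Nat.div_div_eq_div_mul]

lemma dg_succ (b k l N : ℕ) :
    dg b k l (N + 1) = (if k % b ≠ l % b then 1 else 0) + dg b (k / b) (l / b) N := by
  unfold dg
  rw [Finset.card_filter, Finset.card_filter, Finset.sum_range_succ']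
  simp only [bdigit_zero, bdigit_succ]
  ring

lemma dg_le (b k l N : ℕ) : dg b k l N ≤ dg b k 0 N + dg b l 0 N := by
  unfold dg
  refine le_trans (Finset.card_le_card ?_) (Finset.card_union_le _ _)
  intro i hi
  simp only [Finset.mem_filter, Finset.mem_union, Finset.mem_range] at hi ⊢
  by_contra hc
  push Not at hc
  exact hi.2 ((hc.1 hi.1).trans (hc.2 hi.1).symm)

lemma bdigit_sum {b : ℕ} (hb : 0 < b) (N : ℕ) : ∀ (c : ℕ → ℕ) (_ : ∀ i, c i < b) (j : ℕ),
    bdigit b (∑ i ∈ Finset.range N, c i * b ^ i) j = if j < N then c j else 0 := by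
  induction N with
  | zero => intro c _ j; simp [bdigit]
  | succ N ih =>
    intro c hc j
    have e : ∑ i ∈ Finset.range (N + 1), c i * b ^ i
        = c 0 + b * ∑ i ∈ Finset.range N, c (i + 1) * b ^ i := by
      rw [Finset.sum_range_succ', Finset.mul_sum, add_comm]
      simp only [pow_zero, mul_one]
      congr 1
      exact Finset.sum_congr rfl fun i _ => by ring
    rw [e]
    cases j with
    | zero => simp [bdigit_zero, Nat.mod_eq_of_lt (hc 0)]
    | succ j =>
      rw [bdigit_succ, Nat.add_mul_div_left _ _ hb, Nat.div_eq_of_lt (hc 0), zero_add,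
        ih _ fun i => hc (i + 1)]
      simp

/-- Equality holds as well; only this inequality is needed. -/
lemma hamming_dsub_le {b : ℕ} (hb : 0 < b) (k l : ℕ) :
    hamming b (dsub b k l) ≤ dg b k l (k + l + 1) := by
  refine Finset.card_le_card fun j hj => ?_
  have h1 : bdigit b (dsub b k l) j ≠ 0 := (Finset.mem_filter.1 hj).2
  rw [dsub, bdigit_sum hb _ _ fun i => Nat.mod_lt _ hb] at h1
  have hlt : j < k + l + 1 := by by_contra hc; simp [hc] at h1
  rw [if_pos hlt] at h1
  refine Finset.mem_filter.2 ⟨Finset.mem_range.2 hlt, fun he => h1 ?_⟩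
  have : bdigit b l j < b := Nat.mod_lt _ hb
  rw [he, Nat.add_sub_cancel' this.le, Nat.mod_self]

/-! ### Walsh functions under the maps `x ↦ (i + x) / b` -/

/-- The phase `ω_b ^ (d * i)` contributed by a digit `d` of the index and a digit `i` of the
argument. -/
noncomputable def ph (b d i : ℕ) : ℂ :=
  Complex.exp (2 * (Real.pi : ℂ) * Complex.I / (b : ℂ) * ((d : ℂ) * (i : ℂ)))

lemma conj_ph (b d i : ℕ) : (starRingEnd ℂ) (ph b d i) =
    Complex.exp (-(2 * (Real.pi : ℂ) * Complex.I / (b : ℂ) * ((d : ℂ) * (i : ℂ)))) := by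
  rw [ph, ← Complex.exp_conj]
  simp only [map_mul, map_div₀, Complex.conj_ofReal, Complex.conj_I, map_natCast, map_ofNat]
  congr 1
  ring

/-- Orthogonality of the characters of `ℤ/bℤ`. -/
lemma sum_ph {b : ℕ} (hb : 0 < b) {d e : ℕ} (hd : d < b) (he : e < b) (hde : d ≠ e) :
    ∑ i ∈ Finset.range b, (starRingEnd ℂ) (ph b d i) * ph b e i = 0 := by
  have hb0 : (b : ℂ) ≠ 0 := by exact_mod_cast hb.ne'
  set z : ℂ := Complex.exp (2 * (Real.pi : ℂ) * Complex.I / (b : ℂ) * ((e : ℂ) - d)) with hz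
  have h1 : ∀ i ∈ Finset.range b, (starRingEnd ℂ) (ph b d i) * ph b e i = z ^ i := by
    intro i _
    rw [conj_ph, ph, ← Complex.exp_add, hz, ← Complex.exp_nat_mul]
    congr 1
    ring
  have hzb : z ^ b = 1 := by
    rw [hz, ← Complex.exp_nat_mul, Complex.exp_eq_one_iff]
    refine ⟨(e : ℤ) - d, ?_⟩
    push_cast
    field_simp
  have hz1 : z ≠ 1 := by
    rw [hz, Ne, Complex.exp_eq_one_iff]
    rintro ⟨n, hn⟩
    have hpi : (2 * (Real.pi : ℂ) * Complex.I) ≠ 0 := Complex.two_pi_I_ne_zero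
    have h2 : (2 * (Real.pi : ℂ) * Complex.I) * ((e : ℂ) - d)
        = (2 * (Real.pi : ℂ) * Complex.I) * (n * b) := by
      field_simp at hn
      linear_combination (2 * (Real.pi : ℂ) * Complex.I) * hn
    have h3 : ((e : ℤ) - d) = n * b := by exact_mod_cast mul_left_cancel₀ hpi h2
    have h4 : (b : ℤ) ∣ (e : ℤ) - d := ⟨n, by rw [h3]; ring⟩
    have h5 := Int.eq_zero_of_abs_lt_dvd h4 (by rw [abs_lt]; constructor <;> omega)
    omega
  rw [Finset.sum_congr rfl h1, geom_sum_eq hz1, hzb]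
  simp

lemma walsh_eq_range {b : ℕ} (hb : 1 < b) {k N : ℕ} (hN : k + 1 ≤ N) (x : ℝ) :
    walsh b k x = Complex.exp (2 * (Real.pi : ℂ) * Complex.I / (b : ℂ) *
      ∑ a ∈ Finset.range N, (bdigit b k a : ℂ) * (rdigit b x (a + 1) : ℂ)) := by
  unfold walsh
  congr 2
  refine Finset.sum_subset (Finset.range_mono hN) fun a _ ha => ?_
  have h1 : k < b ^ a := lt_of_lt_of_le (Nat.lt_pow_self hb)
    (Nat.pow_le_pow_right (by omega) (by simp at ha; omega))
  simp [bdigit, Nat.div_eq_of_lt h1]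

/-- Prepending the digit `i` to the expansion of `x` splits off the lowest digit of `k`. -/
lemma walsh_scale {b : ℕ} (hb : 1 < b) (k i : ℕ) (hi : i < b) {x : ℝ}
    (hx : x ∈ Set.Ico (0 : ℝ) 1) :
    walsh b k ((i + x) / b) = ph b (k % b) i * walsh b (k / b) x := by
  have hb0 : (b : ℝ) ≠ 0 := by positivity
  rw [walsh_eq_range hb (Nat.le_succ (k + 1)),
    walsh_eq_range hb (k := k / b) (N := k + 1) (by have := Nat.div_le_self k b; omega),
    ph, ← Complex.exp_add, ← mul_add, Finset.sum_range_succ']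
  have h0 : rdigit b ((i + x) / b) 1 = i := by
    have : ⌊(i + x : ℝ)⌋ = i := by
      rw [Int.floor_natCast_add, Int.floor_eq_zero_iff.2 hx, add_zero]
    rw [rdigit, pow_one, div_mul_cancel₀ _ hb0, this]
    exact Int.emod_eq_of_lt (by omega) (by omega)
  have h1 : ∀ a, rdigit b ((i + x) / b) (a + 1 + 1) = rdigit b x (a + 1) := by
    intro a
    have e : (i + x) / b * (b : ℝ) ^ (a + 1 + 1)
        = ((i * b ^ a * b : ℤ) : ℝ) + x * (b : ℝ) ^ (a + 1) := by
      push_cast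
      field_simp
      ring
    rw [rdigit, e, Int.floor_intCast_add, rdigit]
    simp
  simp only [h0, h1, bdigit_zero, bdigit_succ, zero_add]
  congr 2
  push_cast
  ring

lemma measurable_walsh (b k : ℕ) : Measurable (walsh b k) := by
  unfold walsh rdigit
  refine Complex.measurable_exp.comp (Measurable.const_mul ?_ _)
  refine Finset.measurable_sum _ fun a _ => Measurable.const_mul ?_ _
  have h : Measurable fun x : ℝ => ⌊x * (b : ℝ) ^ (a + 1)⌋ :=
    Int.measurable_floor.comp (measurable_id.mul_const _)
  exact (measurable_from_top (f := fun z : ℤ => (((z % b : ℤ)) : ℂ))).comp h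

lemma norm_walsh (b k : ℕ) (x : ℝ) : ‖walsh b k x‖ = 1 := by
  have : walsh b k x = Complex.exp (((2 * Real.pi / b *
      ∑ a ∈ Finset.range (k + 1), (bdigit b k a : ℝ) * (rdigit b x (a + 1) : ℝ) : ℝ) : ℂ)
        * Complex.I) := by
    unfold walsh
    congr 1
    push_cast
    ring
  rw [this, Complex.norm_exp_ofReal_mul_I]

lemma integral_split {b : ℕ} (hb : 0 < b) {f : ℝ → ℂ}
    (hf : IntegrableOn f (Set.Ico (0 : ℝ) 1)) :
    ∫ x in Set.Ico (0 : ℝ) 1, f x =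
      (b : ℂ)⁻¹ * ∑ i ∈ Finset.range b, ∫ x in Set.Ico (0 : ℝ) 1, f ((i + x) / b) := by
  have hb0 : (b : ℝ) ≠ 0 := by positivity
  have hbp : (0 : ℝ) < b := by positivity
  have conv : ∀ g : ℝ → ℂ, ∫ x in Set.Ico (0 : ℝ) 1, g x = ∫ x in (0 : ℝ)..1, g x := by
    intro g
    rw [intervalIntegral.integral_of_le zero_le_one, integral_Ico_eq_integral_Ioo,
      integral_Ioc_eq_integral_Ioo]
  have hI : IntervalIntegrable f volume 0 1 := by
    rw [intervalIntegrable_iff_integrableOn_Ico_of_le zero_le_one]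
    exact hf
  simp only [conv]
  have hs := intervalIntegral.sum_integral_adjacent_intervals (f := f) (μ := volume)
    (a := fun i : ℕ => (i : ℝ) / b) (n := b) (fun i hi => by
      refine hI.mono_set ?_
      have h1 : ((i + 1 : ℕ) : ℝ) ≤ b := by exact_mod_cast hi
      rw [Set.uIcc_of_le zero_le_one, Set.uIcc_of_le (by gcongr; simp)]
      exact Set.Icc_subset_Icc (by positivity) (by rw [div_le_one hbp]; exact h1))
  simp only [Nat.cast_zero, zero_div, div_self hb0] at hs
  rw [← hs, Finset.mul_sum]
  refine Finset.sum_congr rfl fun i _ => ?_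
  have h2 := intervalIntegral.integral_comp_add_div (a := 0) (b := 1) f hb0 ((i : ℝ) / b)
  have h3 : ∀ x : ℝ, ((i : ℝ) + x) / b = (i : ℝ) / b + x / b := fun x => by ring
  simp only [h3, h2]
  rw [Complex.real_smul, ← mul_assoc]
  have : (b : ℂ) ≠ 0 := by exact_mod_cast hb.ne'
  simp only [Complex.ofReal_natCast, inv_mul_cancel₀ this, one_mul, zero_div, add_zero]
  congr 1
  push_cast
  ring

/-! ### Univariate coefficients -/

/-- The `k`-th Walsh coefficient of a function on `[0,1)`. -/
noncomputable def W1 (b : ℕ) (f : ℝ → ℝ) (k : ℕ) : ℂ :=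
  ∫ x in Set.Ico (0 : ℝ) 1, (f x : ℂ) * (starRingEnd ℂ) (walsh b k x)

lemma integrable_W1 (b : ℕ) {f : ℝ → ℝ} (hf : Continuous f) (k : ℕ) :
    IntegrableOn (fun x => (f x : ℂ) * (starRingEnd ℂ) (walsh b k x)) (Set.Ico (0 : ℝ) 1) := by
  have h1 : IntegrableOn (fun x => (f x : ℂ)) (Set.Ico (0 : ℝ) 1) :=
    ((Complex.continuous_ofReal.comp hf).integrableOn_Icc).mono_set Set.Ico_subset_Icc_self
  refine h1.mul_bdd (c := 1)
    ((Complex.continuous_conj.measurable.comp (measurable_walsh b k)).aestronglyMeasurable) ?_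
  exact Filter.Eventually.of_forall fun x => by simp [norm_walsh]

lemma W1_scale {b : ℕ} (hb : 1 < b) {f : ℝ → ℝ} (hf : Continuous f) (k : ℕ) :
    W1 b f k = (b : ℂ)⁻¹ * ∑ i ∈ Finset.range b, (starRingEnd ℂ) (ph b (k % b) i) *
      W1 b (fun x => f ((i + x) / b)) (k / b) := by
  rw [W1, integral_split (b := b) (by omega) (integrable_W1 b hf k)]
  congr 1
  refine Finset.sum_congr rfl fun i hi => ?_
  rw [W1, ← integral_const_mul]
  refine setIntegral_congr_fun measurableSet_Ico fun x hx => ?_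
  simp only [walsh_scale hb k i (Finset.mem_range.1 hi) hx, map_mul]
  ring

lemma W1_sum (b : ℕ) {ι : Type*} (s : Finset ι) (c : ι → ℝ) (f : ι → ℝ → ℝ)
    (hf : ∀ i, Continuous (f i)) (k : ℕ) :
    W1 b (fun x => ∑ i ∈ s, c i * f i x) k = ∑ i ∈ s, (c i : ℂ) * W1 b (f i) k := by
  simp only [W1, ← integral_const_mul]
  rw [← integral_finsetSum _ fun i _ => (integrable_W1 b (hf i) k).const_mul _]
  congr 1
  ext x
  push_cast
  rw [Finset.sum_mul]
  exact Finset.sum_congr rfl fun i _ => by ring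

/-- Walsh coefficients of `x ^ n` vanish when `k` has more than `n` nonzero digits. After one
scaling step the monomials of degree below `n` are covered by induction, as `k / b` has lost at
most one nonzero digit; the leading one either has a vanishing phase sum (`k % b ≠ 0`) or is again
covered by induction (`k % b = 0`). -/
lemma W1_pow {b : ℕ} (hb : 1 < b) (N : ℕ) : ∀ k n : ℕ, n < dg b k 0 N →
    W1 b (fun x => x ^ n) k = 0 := by
  induction N with
  | zero => intro k n h; simp [dg] at h
  | succ N ih =>
    intro k n h
    rw [dg_succ] at h
    have e : ∀ i : ℕ, (fun x : ℝ => ((i + x) / b) ^ n) = fun x =>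
        ∑ m ∈ Finset.range (n + 1), ((b : ℝ)⁻¹ ^ n * (i : ℝ) ^ (n - m) * (n.choose m)) * x ^ m := by
      intro i
      ext x
      rw [div_pow, add_comm, add_pow, Finset.sum_div]
      refine Finset.sum_congr rfl fun m _ => ?_
      rw [inv_pow]
      field_simp
    rw [W1_scale hb (by fun_prop)]
    simp only [e]
    have e2 : ∀ i : ℕ, W1 b (fun x : ℝ => ∑ m ∈ Finset.range (n + 1),
        ((b : ℝ)⁻¹ ^ n * (i : ℝ) ^ (n - m) * (n.choose m)) * x ^ m) (k / b) =
        ((b : ℝ)⁻¹ ^ n : ℝ) * W1 b (fun x => x ^ n) (k / b) := by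
      intro i
      rw [W1_sum b _ _ _ (by intro m; fun_prop), Finset.sum_range_succ, Finset.sum_eq_zero]
      · simp
      · intro m hm
        rw [ih _ _ _, mul_zero]
        have := Finset.mem_range.1 hm
        simp only [Nat.zero_div] at h
        split_ifs at h <;> omega
    simp only [e2]
    by_cases h0 : k % b = 0
    · simp only [h0, Nat.zero_mod, ne_eq, not_true_eq_false, if_false, Nat.zero_div, zero_add] at h
      rw [ih _ _ h]
      simp
    · have hs := sum_ph (b := b) (by omega) (Nat.mod_lt k (by omega)) (by omega : 0 < b) h0
      have : ∀ i, ph b 0 i = 1 := by intro i; simp [ph]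
      simp only [this, mul_one] at hs
      rw [← Finset.sum_mul, hs]
      simp

lemma W1_poly {b : ℕ} (hb : 1 < b) {N k : ℕ} (p : Polynomial ℝ) (h : p.natDegree < dg b k 0 N) :
    W1 b (fun x => p.eval x) k = 0 := by
  simp only [Polynomial.eval_eq_sum_range]
  rw [W1_sum b _ _ _ (by intro m; fun_prop)]
  refine Finset.sum_eq_zero fun i hi => ?_
  rw [W1_pow hb N, mul_zero]
  have := Finset.mem_range.1 hi
  omega

/-! ### Bivariate coefficients -/

/-- The `(k,l)`-th Walsh coefficient of a function on `[0,1)²`, as an iterated integral. -/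
noncomputable def W2 (b : ℕ) (F : ℝ → ℝ → ℝ) (k l : ℕ) : ℂ :=
  ∫ x in Set.Ico (0 : ℝ) 1, ∫ y in Set.Ico (0 : ℝ) 1,
    (F x y : ℂ) * (starRingEnd ℂ) (walsh b k x) * walsh b l y

lemma integrable_W2 (b : ℕ) {F : ℝ → ℝ → ℝ} (hF : Continuous (Function.uncurry F)) (k l : ℕ) :
    Integrable (fun p : ℝ × ℝ =>
      (F p.1 p.2 : ℂ) * (starRingEnd ℂ) (walsh b k p.1) * walsh b l p.2)
      ((volume.restrict (Set.Ico (0 : ℝ) 1)).prod (volume.restrict (Set.Ico (0 : ℝ) 1))) := by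
  have h1 : IntegrableOn (fun p : ℝ × ℝ => (F p.1 p.2 : ℂ))
      (Set.Ico (0 : ℝ) 1 ×ˢ Set.Ico (0 : ℝ) 1) (volume.prod volume) := by
    have hc : Continuous fun p : ℝ × ℝ => (F p.1 p.2 : ℂ) := Complex.continuous_ofReal.comp hF
    exact (hc.continuousOn.integrableOn_compact
      ((isCompact_Icc (a := (0 : ℝ)) (b := 1)).prod (isCompact_Icc (a := (0 : ℝ)) (b := 1)))).mono_set
      (Set.prod_mono Set.Ico_subset_Icc_self Set.Ico_subset_Icc_self)
  rw [Measure.prod_restrict]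
  refine (h1.mul_bdd (c := 1) ?_ ?_).mul_bdd (c := 1) ?_ ?_
  · exact (Complex.continuous_conj.measurable.comp
      ((measurable_walsh b k).comp measurable_fst)).aestronglyMeasurable
  · exact Filter.Eventually.of_forall fun x => by simp [norm_walsh]
  · exact ((measurable_walsh b l).comp measurable_snd).aestronglyMeasurable
  · exact Filter.Eventually.of_forall fun x => by simp [norm_walsh]

lemma integrable_W2_inner (b : ℕ) {F : ℝ → ℝ → ℝ} (hF : Continuous (Function.uncurry F))
    (k l : ℕ) (x : ℝ) : IntegrableOn (fun y : ℝ =>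
      (F x y : ℂ) * (starRingEnd ℂ) (walsh b k x) * walsh b l y) (Set.Ico (0 : ℝ) 1) := by
  have hc : Continuous fun y : ℝ => (F x y : ℂ) * (starRingEnd ℂ) (walsh b k x) :=
    (Complex.continuous_ofReal.comp (hF.comp (Continuous.prodMk_right x))).mul continuous_const
  refine (hc.integrableOn_Icc.mono_set Set.Ico_subset_Icc_self).mul_bdd (c := 1)
    (measurable_walsh b l).aestronglyMeasurable ?_
  exact Filter.Eventually.of_forall fun x => by simp [norm_walsh]

lemma W2_eq_prod (b : ℕ) {F : ℝ → ℝ → ℝ} (hF : Continuous (Function.uncurry F)) (k l : ℕ) :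
    W2 b F k l = ∫ p : ℝ × ℝ,
      (F p.1 p.2 : ℂ) * (starRingEnd ℂ) (walsh b k p.1) * walsh b l p.2
      ∂((volume.restrict (Set.Ico (0 : ℝ) 1)).prod (volume.restrict (Set.Ico (0 : ℝ) 1))) := by
  rw [integral_prod _ (integrable_W2 b hF k l), W2]

lemma W2_sum (b : ℕ) {ι : Type*} (s : Finset ι) (c : ι → ℝ) (F : ι → ℝ → ℝ → ℝ)
    (hF : ∀ i, Continuous (Function.uncurry (F i))) (k l : ℕ) :
    W2 b (fun x y => ∑ i ∈ s, c i * F i x y) k l = ∑ i ∈ s, (c i : ℂ) * W2 b (F i) k l := by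
  have hc : Continuous (Function.uncurry fun x y => ∑ i ∈ s, c i * F i x y) := by
    have : ∀ i, Continuous fun p : ℝ × ℝ => F i p.1 p.2 := hF
    simp only [Function.uncurry_def]
    fun_prop
  rw [W2_eq_prod b hc]
  simp only [W2_eq_prod b (hF _), ← integral_const_mul]
  rw [← integral_finsetSum _ fun i _ => (integrable_W2 b (hF i) k l).const_mul _]
  congr 1
  ext p
  push_cast
  rw [Finset.sum_mul, Finset.sum_mul]
  exact Finset.sum_congr rfl fun i _ => by ring

lemma W2_congr (b : ℕ) {F G : ℝ → ℝ → ℝ}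
    (h : ∀ x ∈ Set.Ico (0 : ℝ) 1, ∀ y ∈ Set.Ico (0 : ℝ) 1, F x y = G x y) (k l : ℕ) :
    W2 b F k l = W2 b G k l :=
  setIntegral_congr_fun measurableSet_Ico fun x hx =>
    setIntegral_congr_fun measurableSet_Ico fun y hy => by simp only [h x hx y hy]

lemma W2_const_mul (b : ℕ) (c : ℝ) (F : ℝ → ℝ → ℝ) (k l : ℕ) :
    W2 b (fun x y => c * F x y) k l = (c : ℂ) * W2 b F k l := by
  simp only [W2, ← integral_const_mul, Complex.ofReal_mul, mul_assoc]

lemma W2_mul (b : ℕ) (f g : ℝ → ℝ) (k l : ℕ) :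
    W2 b (fun x y => f x * g y) k l = W1 b f k * (starRingEnd ℂ) (W1 b g l) := by
  simp only [W1, W2]
  rw [← integral_conj, ← integral_mul_const]
  congr 1
  ext x
  rw [← integral_const_mul]
  congr 1
  ext y
  simp
  ring

lemma W2_scale {b : ℕ} (hb : 1 < b) {F : ℝ → ℝ → ℝ} (hF : Continuous (Function.uncurry F))
    (k l : ℕ) :
    W2 b F k l = (b : ℂ)⁻¹ * ∑ i ∈ Finset.range b, (b : ℂ)⁻¹ * ∑ j ∈ Finset.range b,
      (starRingEnd ℂ) (ph b (k % b) i) * ph b (l % b) j *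
        W2 b (fun x y => F ((i + x) / b) ((j + y) / b)) (k / b) (l / b) := by
  have hG : ∀ i j : ℕ, Continuous
      (Function.uncurry fun x y => F ((i + x) / b) ((j + y) / b)) := fun i j =>
    hF.comp (f := fun p : ℝ × ℝ => ((i + p.1) / b, (j + p.2) / b)) (by fun_prop)
  rw [W2, integral_split (b := b) (by omega) (integrable_W2 b hF k l).integral_prod_left]
  congr 1
  refine Finset.sum_congr rfl fun i hi => ?_
  rw [Finset.mul_sum]
  simp only [W2, ← integral_const_mul]
  rw [← integral_finsetSum _ fun j _ => ?_]
  · refine setIntegral_congr_fun measurableSet_Ico fun x hx => ?_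
    rw [integral_split (b := b) (by omega) (integrable_W2_inner b hF k l _), Finset.mul_sum]
    refine Finset.sum_congr rfl fun j hj => ?_
    simp only [← integral_const_mul]
    refine setIntegral_congr_fun measurableSet_Ico fun y hy => ?_
    simp only [walsh_scale hb k i (Finset.mem_range.1 hi) hx,
      walsh_scale hb l j (Finset.mem_range.1 hj) hy, map_mul]
    ring
  · simp only [integral_const_mul]
    exact ((integrable_W2 b (hG i j) (k / b) (l / b)).integral_prod_left.const_mul _).const_mul _

lemma W2_poly {b : ℕ} (hb : 1 < b) {N k l n : ℕ} (h : n < dg b k 0 N + dg b l 0 N) (c : ℝ) :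
    W2 b (fun x y => (c + x - y) ^ n) k l = 0 := by
  have e : (fun x y : ℝ => (c + x - y) ^ n) = fun x y => ∑ m ∈ Finset.range (n + 1),
      ((n.choose m : ℝ) * (-1) ^ (n - m)) *
        (((Polynomial.X + Polynomial.C c) ^ m).eval x * (Polynomial.X ^ (n - m)).eval y) := by
    ext x y
    rw [sub_eq_add_neg, add_pow]
    refine Finset.sum_congr rfl fun m _ => ?_
    rw [neg_pow]
    simp only [Polynomial.eval_pow, Polynomial.eval_add, Polynomial.eval_X, Polynomial.eval_C]
    ring
  rw [e, W2_sum]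
  · refine Finset.sum_eq_zero fun m hm => ?_
    rw [W2_mul]
    have := Finset.mem_range.1 hm
    rcases lt_or_ge m (dg b k 0 N) with h1 | h1
    · rw [W1_poly hb (N := N) _ (by rw [Polynomial.natDegree_pow_X_add_C]; exact h1)]
      simp
    · rw [W1_poly hb (N := N) (k := l) _
        (by rw [Polynomial.natDegree_X_pow]; omega)]
      simp
  · intro m
    simp only [Function.uncurry_def]
    fun_prop

/-- One scaling step turns `|x - y| ^ n` into `b ^ 2` pieces indexed by the leading digits `i, j` of
`x, y`. Off the diagonal `x - y` has constant sign, so the piece is a polynomial of degree `n`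
and `W2_poly` applies. The diagonal pieces are all equal up to phase: their phase sum vanishes if
`k % b ≠ l % b`, and otherwise no differing digit has been lost and induction applies. -/
lemma W2_abs {b : ℕ} (hb : 1 < b) (N : ℕ) : ∀ k l n : ℕ, n + 1 < dg b k l N →
    W2 b (fun x y => |x - y| ^ n) k l = 0 := by
  induction N with
  | zero => intro k l n h; simp [dg] at h
  | succ N ih =>
    intro k l n h
    rw [dg_succ] at h
    have hbp : (0 : ℝ) < b := by positivity
    have hlow : n < dg b (k / b) (l / b) N := by split_ifs at h <;> omega
    have hsum := lt_of_lt_of_le hlow (dg_le b (k / b) (l / b) N)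
    have hdiag : ∀ i : ℕ, W2 b (fun x y => |(i + x) / b - (i + y) / b| ^ n) (k / b) (l / b)
        = ((b : ℝ)⁻¹ ^ n : ℝ) * W2 b (fun x y => |x - y| ^ n) (k / b) (l / b) := by
      intro i
      rw [← W2_const_mul]
      congr 1
      ext x y
      rw [show ((i : ℝ) + x) / b - (i + y) / b = (b : ℝ)⁻¹ * (x - y) by field_simp; ring, abs_mul,
        mul_pow, abs_of_pos (inv_pos.2 hbp)]
    have hoff : ∀ i j : ℕ, j ≠ i →
        W2 b (fun x y => |(i + x) / b - (j + y) / b| ^ n) (k / b) (l / b) = 0 := by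
      intro i j hij
      obtain ⟨c, hc⟩ : ∃ c : ℝ, ∀ x ∈ Set.Ico (0 : ℝ) 1, ∀ y ∈ Set.Ico (0 : ℝ) 1,
          |((i : ℝ) + x) / b - (j + y) / b| ^ n = c * (((i : ℝ) - j) + x - y) ^ n := by
        have e : ∀ x y : ℝ, |((i : ℝ) + x) / b - (j + y) / b| ^ n
            = (b : ℝ)⁻¹ ^ n * |((i : ℝ) - j) + x - y| ^ n := by
          intro x y
          rw [show ((i : ℝ) + x) / b - (j + y) / b = (b : ℝ)⁻¹ * (((i : ℝ) - j) + x - y) by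
            field_simp; ring, abs_mul, mul_pow, abs_of_pos (inv_pos.2 hbp)]
        rcases lt_or_gt_of_ne hij with hlt | hlt
        · have h1 : (j : ℝ) + 1 ≤ i := by exact_mod_cast hlt
          refine ⟨(b : ℝ)⁻¹ ^ n, fun x hx y hy => ?_⟩
          rw [e, abs_of_nonneg]
          linarith [hx.1, hy.2]
        · have h1 : (i : ℝ) + 1 ≤ j := by exact_mod_cast hlt
          refine ⟨(b : ℝ)⁻¹ ^ n * (-1) ^ n, fun x hx y hy => ?_⟩
          rw [e, abs_of_nonpos, neg_pow, mul_assoc]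
          linarith [hx.2, hy.1]
      rw [W2_congr b hc, W2_const_mul, W2_poly hb hsum, mul_zero]
    have hcont : Continuous (Function.uncurry fun x y : ℝ => |x - y| ^ n) := by
      simp only [Function.uncurry_def]
      fun_prop
    rw [W2_scale hb hcont]
    have hrow : ∀ i ∈ Finset.range b, (b : ℂ)⁻¹ * ∑ j ∈ Finset.range b,
        (starRingEnd ℂ) (ph b (k % b) i) * ph b (l % b) j *
        W2 b (fun x y => |(i + x) / b - (j + y) / b| ^ n) (k / b) (l / b) =
        (starRingEnd ℂ) (ph b (k % b) i) * ph b (l % b) i * ((b : ℂ)⁻¹ *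
          (((b : ℝ)⁻¹ ^ n : ℝ) * W2 b (fun x y => |x - y| ^ n) (k / b) (l / b))) := by
      intro i hi
      rw [Finset.sum_eq_single i]
      · rw [hdiag]; ring
      · intro j _ hj
        rw [hoff i j hj, mul_zero]
      · exact fun hc => absurd hi hc
    rw [Finset.sum_congr rfl hrow, ← Finset.sum_mul]
    by_cases h0 : k % b = l % b
    · simp only [h0, ne_eq, not_true_eq_false, if_false, zero_add] at h
      rw [ih _ _ _ h]
      simp
    · rw [sum_ph (by omega) (Nat.mod_lt k (by omega)) (Nat.mod_lt l (by omega)) h0]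
      simp

/-! ### The kernel -/

lemma bernoulliPoly_eq_eval (r : ℕ) (x : ℝ) : bernoulliPoly r x =
    ((Polynomial.bernoulli r).map (algebraMap ℚ ℝ)).eval x := by
  rw [bernoulliPoly, Polynomial.eval_map_algebraMap]

lemma natDegree_bernoulli_map_le (r : ℕ) :
    ((Polynomial.bernoulli r).map (algebraMap ℚ ℝ)).natDegree ≤ r := by
  refine Polynomial.natDegree_map_le.trans ?_
  unfold Polynomial.bernoulli
  refine Polynomial.natDegree_sum_le_of_forall_le _ _ fun i hi => ?_
  exact (Polynomial.natDegree_monomial_le _).trans (by omega)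

/-- Proposition 3. For a prime `b` and `α ≥ 2`, if `k, l ∈ ℕ₀` satisfy
`κ(k ⊖ l) > 2α`, then the Walsh coefficient `K̂_α(k,l)` of the kernel vanishes. -/
theorem khat_sparse (b α : ℕ) (hb : b.Prime) (hα : 2 ≤ α) (k l : ℕ)
    (h : 2 * α < hamming b (dsub b k l)) : Khat b α k l = 0 := by
  have hb1 : 1 < b := hb.one_lt
  set N := k + l + 1 with hN
  have hD : 2 * α < dg b k l N := lt_of_lt_of_le h (hamming_dsub_le hb.pos k l)
  have hS : 2 * α < dg b k 0 N + dg b l 0 N := lt_of_lt_of_le hD (dg_le b k l N)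
  let P : ℕ → Polynomial ℝ := fun r => (Polynomial.bernoulli r).map (algebraMap ℚ ℝ)
  have hP : ∀ r, (P r).natDegree ≤ r := natDegree_bernoulli_map_le
  let c : ℝ := (-1 : ℝ) ^ (α + 1) / ((2 * α).factorial : ℝ)
  -- The two parts of the kernel are indexed by `t ∈ {0, 1}`, so that `W2_sum` also splits them.
  have hK : Kker α = fun x y => ∑ t ∈ ({0, 1} : Finset ℕ), (1 : ℝ) * (if t = 0 then
      ∑ r ∈ Finset.range (α + 1), (((r.factorial : ℝ)) ^ 2)⁻¹ * ((P r).eval x * (P r).eval y)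
      else ∑ j ∈ Finset.range ((P (2 * α)).natDegree + 1),
        (c * (P (2 * α)).coeff j) * |x - y| ^ j) := by
    ext x y
    simp only [Finset.sum_pair (zero_ne_one), if_true, one_ne_zero, if_false, one_mul, Kker,
      bernoulliPoly_eq_eval]
    congr 1
    · exact Finset.sum_congr rfl fun r _ => by simp only [P]; ring
    · rw [Polynomial.eval_eq_sum_range]
      simp only [c, P, mul_assoc, ← Finset.mul_sum]
      ring
  change W2 b (Kker α) k l = 0
  rw [hK, W2_sum b _ _ (fun t x y => if t = 0 then _ else _)]
  · rw [Finset.sum_pair zero_ne_one]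
    simp only [if_true, one_ne_zero, if_false]
    rw [W2_sum b _ _ (fun r x y => (P r).eval x * (P r).eval y),
      W2_sum b _ _ (fun j x y => |x - y| ^ j)]
    · rw [Finset.sum_eq_zero, Finset.sum_eq_zero]
      · simp
      · intro j hj
        have h1 := Finset.mem_range.1 hj
        have h2 := hP (2 * α)
        rcases Nat.lt_or_ge j (2 * α) with h3 | h3
        · rw [W2_abs hb1 N _ _ _ (by omega), mul_zero]
        · obtain rfl : j = 2 * α := by omega
          have e : (fun x y : ℝ => |x - y| ^ (2 * α)) = fun x y => (0 + x - y) ^ (2 * α) := by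
            ext x y
            rw [pow_mul, sq_abs, ← pow_mul, zero_add]
          rw [e, W2_poly hb1 hS, mul_zero]
      · intro r hr
        have h1 := Finset.mem_range.1 hr
        have h2 := hP r
        rw [W2_mul]
        rcases lt_or_ge r (dg b k 0 N) with h3 | h3
        · rw [W1_poly hb1 (N := N) _ (by omega)]
          simp
        · rw [W1_poly hb1 (N := N) (k := l) _ (by omega)]
          simp
    · intro j
      simp only [Function.uncurry_def]
      fun_prop
    · intro r
      simp only [Function.uncurry_def]
      fun_prop
  · intro t
    simp only [Function.uncurry_def]
    split_ifs <;> fun_prop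
end
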